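/- Let T be a reasonable decision tree for a training set (E, λ) whose root is an inner node. Then no inner node of T other than the root has both the same feature and the same threshold as the root. Consequently, if P is a decision tree obtained from T by a sequence of subtree raising operations and the root of P is an inner node with the same feature and threshold as the root of T, then the root of T is not pruned by the sequence, and the left and right subtrees of P are obtained from the left and right subtrees of T, respectively, by subtree raising operations. -/

import Mathlib

/-- The two class labels. -/
inductive Label where
  | blue
  | red
deriving DecidableEq

/-- A decision tree over examples `ι → ℝ` with classes `{blue, red}`:
every inner node carries a feature and a threshold, every leaf a class label.
An example goes to the left child if its value in the node's feature is at most
the threshold, and to the right child otherwise. -/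
inductive DTree (ι : Type) where
  | leaf (c : Label)
  | node (feat : ι) (thr : ℝ) (left right : DTree ι)

namespace DTree

variable {ι : Type}

/-- The class that a decision tree assigns to an example. -/
noncomputable def classify : DTree ι → (ι → ℝ) → Label
  | .leaf c, _ => c
  | .node f t l r, e => if e f ≤ t then l.classify e else r.classify e

/-- The routing path of an example (`false` = left child, `true` = right child);
it is the position of the leaf of the example. -/
noncomputable def route : DTree ι → (ι → ℝ) → List Bool
  | .leaf _, _ => []
  | .node f t l r, e => if e f ≤ t then false :: l.route e else true :: r.route e

/-- The subtree rooted at a position (`none` if the position is not a node). -/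
def subtreeAt : DTree ι → List Bool → Option (DTree ι)
  | T, [] => some T
  | .leaf _, _ :: _ => none
  | .node _ _ l r, b :: p => (if b then r else l).subtreeAt p

/-- Replace the subtree at a given position by another tree. -/
def replaceAt : DTree ι → List Bool → DTree ι → DTree ι
  | _, [], T' => T'
  | .leaf c, _ :: _, _ => .leaf c
  | .node f t l r, b :: p, T' =>
      if b then .node f t l (r.replaceAt p T') else .node f t (l.replaceAt p T') r

/-- The number of inner nodes of a decision tree. -/
def innerCount : DTree ι → ℕ
  | .leaf _ => 0
  | .node _ _ l r => 1 + l.innerCount + r.innerCount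

/-- The position `p` is an inner node of `T`. -/
def IsInnerPos (T : DTree ι) (p : List Bool) : Prop :=
  ∃ f t l r, T.subtreeAt p = some (.node f t l r)

/-- The position `p` is a node of `T`. -/
def IsNodePos (T : DTree ι) (p : List Bool) : Prop :=
  (T.subtreeAt p).isSome

/-- The feature and threshold of the inner node at position `p`. -/
def cutAt (T : DTree ι) (p : List Bool) : Option (ι × ℝ) :=
  match T.subtreeAt p with
  | some (.node f t _ _) => some (f, t)
  | _ => none

/-- The subtree raising operation at position `q` keeping the child in direction `b`:
the subtree rooted at `q` is replaced by the subtree rooted at its `b`-child; it prunes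
the node at `q` together with all inner nodes of the subtree rooted at the other child. -/
def raiseAt (T : DTree ι) (q : List Bool) (b : Bool) : DTree ι :=
  match T.subtreeAt q with
  | some (.node _ _ l r) => T.replaceAt q (if b then r else l)
  | _ => T

end DTree

/-- `E[T,p]`: the examples of `E` whose routing through `T` passes the position `p`. -/
noncomputable def reach {ι : Type} (E : Finset (ι → ℝ)) (T : DTree ι) (p : List Bool) :
    Finset (ι → ℝ) :=
  E.filter fun e => p <+: T.route e

/-- The number of errors of `T` on the training set `(E, lab)`. -/
noncomputable def errCount {ι : Type} (T : DTree ι) (E : Finset (ι → ℝ))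
    (lab : (ι → ℝ) → Label) : ℕ :=
  (E.filter fun e => T.classify e ≠ lab e).card

/-- A most frequent label of the labeled set `(E, lab)` (blue in case of a tie). -/
def majorityLabel {ι : Type} (E : Finset (ι → ℝ)) (lab : (ι → ℝ) → Label) : Label :=
  if (E.filter fun e => lab e = Label.red).card ≤ (E.filter fun e => lab e = Label.blue).card
  then Label.blue else Label.red

/-- One subtree replacement operation: some inner node of `T` is replaced by a leaf
labeled with a most frequent label of the examples reaching it. -/
def ReplStep {ι : Type} (E : Finset (ι → ℝ)) (lab : (ι → ℝ) → Label)
    (T T' : DTree ι) : Prop :=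
  ∃ p, T.IsInnerPos p ∧
    T' = T.replaceAt p (.leaf (majorityLabel (reach E T p) lab))

/-- `T` is a reasonable decision tree for `(E, lab)`: every node is reached by some
example and every leaf carries a most frequent label of the examples reaching it. -/
def Reasonable {ι : Type} (E : Finset (ι → ℝ)) (lab : (ι → ℝ) → Label)
    (T : DTree ι) : Prop :=
  (∀ p, T.IsNodePos p → (reach E T p).Nonempty) ∧
  (∀ p c, T.subtreeAt p = some (.leaf c) → ∀ c' : Label,
    ((reach E T p).filter fun e => lab e = c').card ≤
      ((reach E T p).filter fun e => lab e = c).card)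

/-- Apply a sequence of raising operations (given by positions and kept directions). -/
def applySeq {ι : Type} : DTree ι → List (List Bool × Bool) → DTree ι
  | T, [] => T
  | T, (q, b) :: rest => applySeq (T.raiseAt q b) rest

/-- Each raising operation of the sequence is applied at an inner node. -/
def ValidSeq {ι : Type} : DTree ι → List (List Bool × Bool) → Prop
  | _, [] => True
  | T, (q, b) :: rest => T.IsInnerPos q ∧ ValidSeq (T.raiseAt q b) rest

/-- The total number of inner nodes pruned by a sequence of raising operations. -/
def seqPruned {ι : Type} : DTree ι → List (List Bool × Bool) → ℕ
  | _, [] => 0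
  | T, (q, b) :: rest =>
      (match T.subtreeAt q with
        | some (.node _ _ l r) => 1 + DTree.innerCount (if b then l else r)
        | _ => 0) + seqPruned (T.raiseAt q b) rest

/-- `T'` is obtained from `T` by a (possibly empty) sequence of subtree raising
operations. -/
def RaisedFrom {ι : Type} (T T' : DTree ι) : Prop :=
  ∃ steps, ValidSeq T steps ∧ applySeq T steps = T'

/-- `T'` is obtained from `T` by a sequence of subtree raising operations pruning
exactly `m` inner nodes in total. -/
def RaisedFromPruning {ι : Type} (T : DTree ι) (m : ℕ) (T' : DTree ι) : Prop :=
  ∃ steps, ValidSeq T steps ∧ seqPruned T steps = m ∧ applySeq T steps = T'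

/-- Tracking the position of a node through one raising operation: nodes strictly
below the raised node on the discarded side, and the raised node itself, are pruned
(`none`); all other nodes survive at a possibly shifted position. -/
def stepMap (q : List Bool) (b : Bool) (p : List Bool) : Option (List Bool) :=
  if q <+: p then
    if q ++ [b] <+: p then some (q ++ p.drop (q.length + 1)) else none
  else some p

/-- Tracking the position of a node through a sequence of raising operations. -/
def seqMap : List (List Bool × Bool) → List Bool → Option (List Bool)
  | [], p => some p
  | (q, b) :: rest, p => (stepMap q b p).bind (seqMap rest)

/-- The number of errors of `T` on a multiset of labeled examples. -/
noncomputable def errCountM {ι : Type} (T : DTree ι) (E : Multiset ((ι → ℝ) × Label)) : ℕ :=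
  (E.filter fun q => T.classify q.1 ≠ q.2).card

/-!
An example below the root in direction `a` has already passed the root's test in direction `a`,
so at a node with the same cut it takes direction `a` again; the other child of that node is
reached by no example. Hence cuts never repeat along a path of a tree all of whose nodes are
reached. Raising creates no new cuts, so once the root has been pruned its cut is lost for good,
whereas as long as the root survives every raising operation takes place inside one of its two
subtrees.
-/

namespace DTree

variable {ι : Type} {T S : DTree ι} {p q : List Bool} {e : ι → ℝ} {f : ι} {t : ℝ}
  {l r : DTree ι}

theorem cutAt_eq_some_iff :
    T.cutAt p = some (f, t) ↔ ∃ l r, T.subtreeAt p = some (node f t l r) := by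
  rcases h : T.subtreeAt p with _ | _ | _ <;> simp [cutAt, h]

theorem subtreeAt_append (T : DTree ι) (p q : List Bool) :
    T.subtreeAt (p ++ q) = (T.subtreeAt p).bind fun S => S.subtreeAt q := by
  induction p generalizing T with
  | nil => rfl
  | cons a p ih => cases T with
    | leaf c => rfl
    | node f t l r => exact ih _

theorem isNodePos_append_singleton_of_cutAt (hcut : T.cutAt p = some (f, t)) (b : Bool) :
    T.IsNodePos (p ++ [b]) := by
  obtain ⟨l, r, hp⟩ := cutAt_eq_some_iff.1 hcut
  simp [IsNodePos, subtreeAt_append, hp, subtreeAt]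

theorem route_node (f : ι) (t : ℝ) (l r : DTree ι) (e : ι → ℝ) :
    (node f t l r).route e = decide (t < e f) :: (if t < e f then r else l).route e := by
  rcases le_or_gt (e f) t with h | h
  · simp [route, h, not_lt.2 h]
  · simp [route, h, not_le.2 h]

theorem route_eq_append_of_prefix (hS : T.subtreeAt p = some S) (hp : p <+: T.route e) :
    T.route e = p ++ S.route e := by
  induction p generalizing T with
  | nil => rw [← Option.some.inj hS, List.nil_append]
  | cons a p ih => cases T with
    | leaf c => cases hS
    | node f t l r =>
      rw [route_node, List.cons_prefix_cons] at hp
      obtain ⟨rfl, hp⟩ := hp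
      rw [route_node, List.cons_append, ih (by simpa [subtreeAt] using hS) hp]

theorem eq_decide_of_append_singleton_prefix_route {b : Bool} (hcut : T.cutAt p = some (f, t))
    (hpre : p ++ [b] <+: T.route e) : b = decide (t < e f) := by
  obtain ⟨l, r, hp⟩ := cutAt_eq_some_iff.1 hcut
  rw [route_eq_append_of_prefix hp ((List.prefix_append p [b]).trans hpre),
    List.prefix_append_right_inj, route_node, List.cons_prefix_cons] at hpre
  exact hpre.1

/-- Every node of `T` lies on the routing path of some example, which may be any point of `ι → ℝ`:
the nonemptiness condition of `Reasonable` freed from the training set. -/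
def AllNodesReachable (T : DTree ι) : Prop :=
  ∀ p, T.IsNodePos p → ∃ e, p <+: T.route e

theorem AllNodesReachable.eq_of_prefix_of_cutAt_eq {c : ι × ℝ} (hT : T.AllNodesReachable)
    (hpq : p <+: q) (hp : T.cutAt p = some c) (hq : T.cutAt q = some c) : p = q := by
  obtain ⟨s, rfl⟩ := hpq
  rcases s with _ | ⟨a, s⟩
  · exact (List.append_nil p).symm
  · obtain ⟨e, he⟩ := hT _ (isNodePos_append_singleton_of_cutAt hq !a)
    have hturn_p : a = decide (c.2 < e c.1) :=
      eq_decide_of_append_singleton_prefix_route hp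
        (List.IsPrefix.trans ⟨s ++ [!a], by simp⟩ he)
    have hturn_q : (!a) = decide (c.2 < e c.1) :=
      eq_decide_of_append_singleton_prefix_route hq he
    exact absurd (hturn_q.trans hturn_p.symm) (Bool.not_ne_self a)

theorem AllNodesReachable.cutAt_ne_root (hT : (node f t l r).AllNodesReachable) (hp : p ≠ []) :
    (node f t l r).cutAt p ≠ some (f, t) := fun hcut =>
  hp (hT.eq_of_prefix_of_cutAt_eq List.nil_prefix rfl hcut).symm

/-- The cuts of `T`: the pairs (feature, threshold) labeling its inner nodes. -/
def cuts (T : DTree ι) : Set (ι × ℝ) :=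
  {c | ∃ p, T.cutAt p = some c}

theorem cuts_node (f : ι) (t : ℝ) (l r : DTree ι) :
    (node f t l r).cuts = insert (f, t) (l.cuts ∪ r.cuts) := by
  ext c
  constructor
  · rintro ⟨_ | ⟨_ | _, p⟩, hp⟩
    · exact .inl (Option.some.inj hp).symm
    · exact .inr (.inl ⟨p, hp⟩)
    · exact .inr (.inr ⟨p, hp⟩)
  · rintro (rfl | ⟨p, hp⟩ | ⟨p, hp⟩)
    · exact ⟨[], rfl⟩
    · exact ⟨false :: p, hp⟩
    · exact ⟨true :: p, hp⟩

theorem raiseAt_leaf (c : Label) (q : List Bool) (b : Bool) :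
    (leaf c : DTree ι).raiseAt q b = leaf c := by
  cases q <;> rfl

theorem raiseAt_node_nil (f : ι) (t : ℝ) (l r : DTree ι) (b : Bool) :
    (node f t l r).raiseAt [] b = if b then r else l := by
  simp only [raiseAt, subtreeAt, replaceAt]

theorem raiseAt_node_false_cons (f : ι) (t : ℝ) (l r : DTree ι) (q : List Bool) (b : Bool) :
    (node f t l r).raiseAt (false :: q) b = node f t (l.raiseAt q b) r := by
  rcases h : l.subtreeAt q with _ | _ | _ <;> simp [raiseAt, subtreeAt, replaceAt, h]

theorem raiseAt_node_true_cons (f : ι) (t : ℝ) (l r : DTree ι) (q : List Bool) (b : Bool) :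
    (node f t l r).raiseAt (true :: q) b = node f t l (r.raiseAt q b) := by
  rcases h : r.subtreeAt q with _ | _ | _ <;> simp [raiseAt, subtreeAt, replaceAt, h]

theorem cuts_raiseAt_subset (T : DTree ι) (q : List Bool) (b : Bool) :
    (T.raiseAt q b).cuts ⊆ T.cuts := by
  induction T generalizing q with
  | leaf c => rw [raiseAt_leaf]
  | node f t l r ihl ihr =>
    rcases q with _ | ⟨_ | _, q⟩
    · rw [raiseAt_node_nil, cuts_node]
      cases b
      · exact Set.subset_union_left.trans (Set.subset_insert _ _)
      · exact Set.subset_union_right.trans (Set.subset_insert _ _)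
    · rw [raiseAt_node_false_cons, cuts_node, cuts_node]
      exact Set.insert_subset_insert (Set.union_subset_union_left _ (ihl q))
    · rw [raiseAt_node_true_cons, cuts_node, cuts_node]
      exact Set.insert_subset_insert (Set.union_subset_union_right _ (ihr q))

theorem cuts_applySeq_subset (T : DTree ι) (steps : List (List Bool × Bool)) :
    (applySeq T steps).cuts ⊆ T.cuts := by
  induction steps generalizing T with
  | nil => exact subset_rfl
  | cons s steps ih => exact (ih _).trans (cuts_raiseAt_subset T s.1 s.2)

theorem AllNodesReachable.root_cut_notMem_cuts_subtrees (hT : (node f t l r).AllNodesReachable) :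
    (f, t) ∉ l.cuts ∪ r.cuts := by
  rintro (⟨p, hp⟩ | ⟨p, hp⟩)
  · exact hT.cutAt_ne_root (List.cons_ne_nil false p) hp
  · exact hT.cutAt_ne_root (List.cons_ne_nil true p) hp

end DTree

section RootTracking

variable {ι : Type} {T T' : DTree ι}

theorem Reasonable.allNodesReachable {E : Finset (ι → ℝ)} {lab : (ι → ℝ) → Label}
    (h : Reasonable E lab T) : T.AllNodesReachable := fun p hp =>
  let ⟨e, he⟩ := h.1 p hp
  ⟨e, (Finset.mem_filter.1 he).2⟩

theorem RaisedFrom.refl (T : DTree ι) : RaisedFrom T T :=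
  ⟨[], trivial, rfl⟩

theorem RaisedFrom.head {q : List Bool} {b : Bool} (hq : T.IsInnerPos q)
    (h : RaisedFrom (T.raiseAt q b) T') : RaisedFrom T T' :=
  let ⟨steps, hvalid, happly⟩ := h
  ⟨(q, b) :: steps, ⟨hq, hvalid⟩, happly⟩

theorem seqMap_nil_cons_nil (b : Bool) (steps : List (List Bool × Bool)) :
    seqMap (([], b) :: steps) [] = none := by
  simp [seqMap, stepMap]

theorem seqMap_cons_cons_nil (a : Bool) (q : List Bool) (b : Bool)
    (steps : List (List Bool × Bool)) :
    seqMap ((a :: q, b) :: steps) [] = seqMap steps [] := by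
  simp [seqMap, stepMap]

theorem exists_applySeq_eq_node_of_seqMap_nil {f : ι} {t : ℝ} {l r : DTree ι}
    {steps : List (List Bool × Bool)} (hvalid : ValidSeq (.node f t l r) steps)
    (hroot : seqMap steps [] = some []) :
    ∃ l' r', applySeq (.node f t l r) steps = .node f t l' r' ∧
      RaisedFrom l l' ∧ RaisedFrom r r' := by
  induction steps generalizing l r with
  | nil => exact ⟨l, r, rfl, .refl l, .refl r⟩
  | cons s steps ih =>
    obtain ⟨_ | ⟨_ | _, q⟩, b⟩ := s
    · simp [seqMap_nil_cons_nil] at hroot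
    · obtain ⟨hq, hvalid⟩ := hvalid
      rw [seqMap_cons_cons_nil] at hroot
      rw [DTree.raiseAt_node_false_cons] at hvalid
      obtain ⟨l', r', happly, hl, hr⟩ := ih hvalid hroot
      exact ⟨l', r', by rwa [applySeq, DTree.raiseAt_node_false_cons], hl.head hq, hr⟩
    · obtain ⟨hq, hvalid⟩ := hvalid
      rw [seqMap_cons_cons_nil] at hroot
      rw [DTree.raiseAt_node_true_cons] at hvalid
      obtain ⟨l', r', happly, hl, hr⟩ := ih hvalid hroot
      exact ⟨l', r', by rwa [applySeq, DTree.raiseAt_node_true_cons], hl, hr.head hq⟩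

theorem cuts_applySeq_subset_of_seqMap_nil_ne (f : ι) (t : ℝ) (l r : DTree ι)
    {steps : List (List Bool × Bool)} (hroot : seqMap steps [] ≠ some []) :
    (applySeq (.node f t l r) steps).cuts ⊆ l.cuts ∪ r.cuts := by
  induction steps generalizing l r with
  | nil => exact absurd rfl hroot
  | cons s steps ih =>
    obtain ⟨_ | ⟨_ | _, q⟩, b⟩ := s
    · rw [applySeq, DTree.raiseAt_node_nil]
      refine (DTree.cuts_applySeq_subset _ steps).trans ?_
      cases b
      · exact Set.subset_union_left
      · exact Set.subset_union_right
    · rw [seqMap_cons_cons_nil] at hroot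
      rw [applySeq, DTree.raiseAt_node_false_cons]
      exact (ih _ _ hroot).trans
        (Set.union_subset_union_left _ (DTree.cuts_raiseAt_subset l q b))
    · rw [seqMap_cons_cons_nil] at hroot
      rw [applySeq, DTree.raiseAt_node_true_cons]
      exact (ih _ _ hroot).trans
        (Set.union_subset_union_right _ (DTree.cuts_raiseAt_subset r q b))

end RootTracking

theorem stmt7_general {ι : Type} {f : ι} {t : ℝ} {l r : DTree ι}
    (hreach : (DTree.node f t l r).AllNodesReachable) :
    (∀ p : List Bool, p ≠ [] → (DTree.node f t l r).cutAt p ≠ some (f, t))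
    ∧ (∀ steps : List (List Bool × Bool), ValidSeq (DTree.node f t l r) steps →
        ∀ l' r' : DTree ι,
          applySeq (DTree.node f t l r) steps = DTree.node f t l' r' →
          seqMap steps [] = some [] ∧ RaisedFrom l l' ∧ RaisedFrom r r') := by
  refine ⟨fun p hp => hreach.cutAt_ne_root hp, fun steps hvalid l' r' happly => ?_⟩
  have hroot : seqMap steps [] = some [] := by
    by_contra hpruned
    have hsub := cuts_applySeq_subset_of_seqMap_nil_ne f t l r hpruned
    rw [happly] at hsub
    exact hreach.root_cut_notMem_cuts_subtrees (hsub ⟨[], rfl⟩)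
  obtain ⟨l₁, r₁, happly₁, hl, hr⟩ := exists_applySeq_eq_node_of_seqMap_nil hvalid hroot
  obtain ⟨-, -, rfl, rfl⟩ := DTree.node.inj (happly₁.symm.trans happly)
  exact ⟨hroot, hl, hr⟩

/-- Let `T = node f t l r` be a reasonable decision tree for
`(E, lab)` whose root is an inner node. Then no inner node of `T` other than the
root has both the same feature and the same threshold as the root. Consequently,
if `P` is obtained from `T` by a sequence of subtree raising operations and the
root of `P` is an inner node with the same feature and threshold as the root
of `T`, then the root of `T` is not pruned by the sequence, and the left and right
subtrees of `P` are obtained from `l` and `r`, respectively, by subtree raising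
operations. -/
theorem stmt7 {d : ℕ} (E : Finset (Fin d → ℝ)) (lab : (Fin d → ℝ) → Label)
    (f : Fin d) (t : ℝ) (l r : DTree (Fin d))
    (hreas : Reasonable E lab (DTree.node f t l r)) :
    (∀ p : List Bool, p ≠ [] → (DTree.node f t l r).cutAt p ≠ some (f, t))
    ∧ (∀ steps : List (List Bool × Bool), ValidSeq (DTree.node f t l r) steps →
        ∀ l' r' : DTree (Fin d),
          applySeq (DTree.node f t l r) steps = DTree.node f t l' r' →
          seqMap steps [] = some [] ∧ RaisedFrom l l' ∧ RaisedFrom r r') :=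
  stmt7_general hreas.allNodesReachable
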